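/- Let F be an invertible n×n matrix over ℝ and G an m×n matrix such that S = −G F⁻¹ Gᵀ is invertible. With Â = [[F, Gᵀ],[G, 0]] and M_B = [[F, Gᵀ],[0, S]], the right-preconditioned matrix satisfies (Â M_B⁻¹ − I)² = 0; that is, Â M_B⁻¹ − I is nilpotent of index at most 2, so a Krylov method applied to the preconditioned system terminates in at most two iterations. -/

import Mathlib

open Matrix

/-- With the exact Schur complement S = −G F⁻¹ Gᵀ, the right-preconditioned
saddle-point matrix satisfies (Â M_B⁻¹ − I)² = 0. -/
theorem exact_schur_preconditioned_nilpotent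
    (n m : ℕ) (F : Matrix (Fin n) (Fin n) ℝ) (G : Matrix (Fin m) (Fin n) ℝ)
    (hF : IsUnit F)
    (S : Matrix (Fin m) (Fin m) ℝ) (hS : S = -(G * F⁻¹ * Gᵀ)) (hSu : IsUnit S)
    (Ahat MB : Matrix (Fin n ⊕ Fin m) (Fin n ⊕ Fin m) ℝ)
    (hA : Ahat = Matrix.fromBlocks F Gᵀ G 0)
    (hMB : MB = Matrix.fromBlocks F Gᵀ 0 S) :
    (Ahat * MB⁻¹ - 1) * (Ahat * MB⁻¹ - 1) = 0 := by
  have hFd : IsUnit F.det := (Matrix.isUnit_iff_isUnit_det F).1 hF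
  have hSd : IsUnit S.det := (Matrix.isUnit_iff_isUnit_det S).1 hSu
  have hMd : IsUnit MB.det := by
    rw [hMB, Matrix.det_fromBlocks_zero₂₁]
    exact hFd.mul hSd
  have hL : Ahat = Matrix.fromBlocks 1 0 (G * F⁻¹) 1 * MB := by
    rw [hA, hMB, Matrix.fromBlocks_multiply, Matrix.nonsing_inv_mul_cancel_right _ _ hFd, hS]
    simp
  have h : Ahat * MB⁻¹ - 1 = Matrix.fromBlocks 0 0 (G * F⁻¹) 0 := by
    rw [hL, Matrix.mul_nonsing_inv_cancel_right _ _ hMd, ← Matrix.fromBlocks_one,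
      sub_eq_iff_eq_add, Matrix.fromBlocks_add]
    simp
  rw [h, Matrix.fromBlocks_multiply]
  simp
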